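/- Let (ψ, N) be a hypersurface of M^n(C), let V be a concircular vector field on M^n(C) with concircular factor μ, let λ ∈ ℝ be a constant, let α : U → ℝ be smooth and nowhere zero, and let T : U → ℝ^{n+1} be a smooth unit field tangent to the hypersurface (⟨T,T⟩ = 1, ⟨T,ψ⟩ = 0, ⟨T,N⟩ = 0, and T(u) lies in the image of dψ_u) such that V(ψ(u)) = α(u)·T(u) + λ·N(u) for all u ∈ U. Then every integral curve of T is a geodesic of M^n(C): if c : I → U is a smooth curve with (ψ∘c)'(s) = T(c(s)) for all s ∈ I, then the curve γ = ψ∘c satisfies γ''(s) = −C·γ(s) for all s ∈ I. -/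

import Mathlib

/-!
Write `⟨·,·⟩` for `form ε` and fix `u ∈ U`. Differentiating `V ∘ ψ = α T + λ N` in a direction `X`
and using concircularity gives
`μ dψ(X) - C α ⟨dψ X, T⟩ ψ = dα(X) T + α dT(X) + λ dN(X)`.
Pairing this identity with `N` leaves `α ⟨dT X, N⟩ = 0`, so `⟨dN X, T⟩ = -⟨dT X, N⟩ = 0` for every
`X`: the shape operator annihilates `T`. Precisely, with `T = dψ(v)`, symmetry of the second
fundamental form (`form_shape_symm`) turns this into `⟨dN v, dψ X⟩ = 0`; moreover `dN v` is
orthogonal to `N` and to `ψ`. As `ψ`, `N` and the image of `dψ` span the ambient space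
(`eq_zero_of_orthogonal_frame`), `dN(v) = 0`.
The identity for `X = v` then reads `μ T - C α ψ = dα(v) T + α dT(v)`; pairing with `T` yields
`dα(v) = μ`, so `α (dT(v) + C ψ) = 0`. Since `α ≠ 0`, `dT(v) = -C ψ`, and for `v = c'(s)` the vector
`dT(v)` is the acceleration of `ψ ∘ c` at `s`.
-/

/-- The bilinear form ⟨x,y⟩ = ε x₁y₁ + x₂y₂ + ⋯ on ℝ^m. -/
noncomputable def form (ε : ℝ) {m : ℕ} [NeZero m] (x y : Fin m → ℝ) : ℝ :=
  (ε - 1) * (x 0 * y 0) + ∑ i, x i * y i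

/-- The space form M^n(C), C = ε/R². -/
def SpaceForm (ε R : ℝ) (n : ℕ) : Set (Fin (n + 1) → ℝ) :=
  {p | form ε p p = 1 / (ε / R ^ 2) ∧ (ε = -1 → 0 < p 0)}

/-- `form ε` as a bilinear map. -/
noncomputable def formBilin (ε : ℝ) (m : ℕ) [NeZero m] :
    (Fin m → ℝ) →ₗ[ℝ] (Fin m → ℝ) →ₗ[ℝ] ℝ :=
  LinearMap.mk₂ ℝ (form ε)
    (by intro x y z; simp only [form, Pi.add_apply, add_mul, Finset.sum_add_distrib]; ring)
    (by
      intro a x y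
      simp only [form, Pi.smul_apply, smul_eq_mul, mul_assoc, ← Finset.mul_sum]; ring)
    (by intro x y z; simp only [form, Pi.add_apply, mul_add, Finset.sum_add_distrib]; ring)
    (by
      intro a x y
      simp only [form, Pi.smul_apply, smul_eq_mul, mul_left_comm _ a, ← Finset.mul_sum]; ring)

section FormAlgebra

variable {ε : ℝ} {m : ℕ} [NeZero m]

lemma form_eq (x y : Fin m → ℝ) : form ε x y = formBilin ε m x y := rfl

lemma form_comm (x y : Fin m → ℝ) : form ε x y = form ε y x := by
  simp only [form, mul_comm]

lemma form_add_left (x y z : Fin m → ℝ) : form ε (x + y) z = form ε x z + form ε y z := by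
  simp [form_eq]

lemma form_add_right (x y z : Fin m → ℝ) : form ε x (y + z) = form ε x y + form ε x z := by
  simp [form_eq]

lemma form_sub_left (x y z : Fin m → ℝ) : form ε (x - y) z = form ε x z - form ε y z := by
  simp [form_eq]

lemma form_smul_left (a : ℝ) (x y : Fin m → ℝ) : form ε (a • x) y = a * form ε x y := by
  simp [form_eq]

lemma form_smul_right (a : ℝ) (x y : Fin m → ℝ) : form ε x (a • y) = a * form ε x y := by
  simp [form_eq]

lemma form_zero_left (y : Fin m → ℝ) : form ε 0 y = 0 := by
  simp [form_eq]

lemma form_nondegenerate (hε : ε ≠ 0) {z : Fin m → ℝ} (h : ∀ y, form ε z y = 0) : z = 0 := by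
  funext i
  have hi := h (Pi.single i 1)
  by_cases h0 : i = 0
  · subst h0
    simp only [form, Pi.single_apply, mul_ite, mul_one, mul_zero, Finset.sum_ite_eq',
      Finset.mem_univ, if_true] at hi
    have : ε * z 0 = 0 := by linarith
    simpa [hε] using this
  · simpa [form, Pi.single_apply, h0, Ne.symm h0, eq_comm] using hi

/-- Leibniz rule for a pair of maps with locally constant product `⟨f, g⟩`. -/
lemma form_leibniz {E : Type*} [NormedAddCommGroup E] [NormedSpace ℝ E]
    {f g : E → Fin m → ℝ} {f' g' : E →L[ℝ] Fin m → ℝ} {u : E} {k : ℝ}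
    (hf : HasFDerivAt f f' u) (hg : HasFDerivAt g g' u)
    (hk : ∀ᶠ x in nhds u, form ε (f x) (g x) = k) (X : E) :
    form ε (f' X) (g u) + form ε (f u) (g' X) = 0 := by
  have h1 := (LinearMap.toContinuousBilinearMap (formBilin ε m)).hasFDerivAt_of_bilinear hf hg
  have h2 : HasFDerivAt (fun x => (LinearMap.toContinuousBilinearMap (formBilin ε m)) (f x) (g x))
      (0 : E →L[ℝ] ℝ) u :=
    (hasFDerivAt_const k u).congr_of_eventuallyEq (by
      filter_upwards [hk] with x hx
      simpa [form_eq] using hx)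
  have h3 := congrArg (fun L : E →L[ℝ] ℝ => L X) (h1.unique h2)
  simp only [form_eq]
  simpa [add_comm] using h3

end FormAlgebra

/-- The position vector, the unit normal and the tangent space span `ℝ^{n+1}`, by counting
dimensions, so only `0` is orthogonal to all of them. -/
lemma eq_zero_of_orthogonal_frame {ε : ℝ} (hε : ε ≠ 0) {n : ℕ} (hn : 2 ≤ n)
    {L : (Fin (n - 1) → ℝ) →L[ℝ] (Fin (n + 1) → ℝ)} (hL : Function.Injective L)
    {p ν z : Fin (n + 1) → ℝ} (hp : form ε p p ≠ 0) (hν : form ε ν ν = 1)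
    (hνp : form ε ν p = 0) (hLp : ∀ X, form ε (L X) p = 0) (hLν : ∀ X, form ε ν (L X) = 0)
    (hzp : form ε z p = 0) (hzν : form ε z ν = 0) (hzL : ∀ X, form ε z (L X) = 0) : z = 0 := by
  let F : ((Fin (n - 1) → ℝ) × ℝ × ℝ) →ₗ[ℝ] (Fin (n + 1) → ℝ) :=
    L.toLinearMap.coprod ((LinearMap.toSpanSingleton ℝ _ p).coprod
      (LinearMap.toSpanSingleton ℝ _ ν))
  have hF : ∀ X a b, F (X, a, b) = L X + (a • p + b • ν) := fun X a b => by simp [F]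
  have hinj : Function.Injective F := by
    rw [← LinearMap.ker_eq_bot, LinearMap.ker_eq_bot']
    rintro ⟨X, a, b⟩ h
    rw [hF] at h
    have h1 : form ε (L X + (a • p + b • ν)) ν = 0 := by rw [h, form_zero_left]
    have h2 : form ε (L X + (a • p + b • ν)) p = 0 := by rw [h, form_zero_left]
    simp only [form_add_left, form_smul_left, form_comm (L X) ν, hLν, form_comm p ν, hνp, hν]
      at h1
    simp only [form_add_left, form_smul_left, hLp, hνp] at h2
    have hb : b = 0 := by linarith
    have ha : a = 0 := by
      have : a * form ε p p = 0 := by linarith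
      exact (mul_eq_zero.1 this).resolve_right hp
    subst ha hb
    have hX : X = 0 := hL (by simpa using h)
    simp [hX]
  have hsurj : Function.Surjective F := by
    refine (LinearMap.injective_iff_surjective_of_finrank_eq_finrank ?_).1 hinj
    simp
    omega
  refine form_nondegenerate hε fun y => ?_
  obtain ⟨⟨X, a, b⟩, rfl⟩ := hsurj y
  simp [hF, form_add_right, form_smul_right, hzp, hzν, hzL]

/-- Symmetry of the second fundamental form: differentiating `⟨N, dψ(Y)⟩ = 0` in the direction `X`
expresses `⟨dN X, dψ Y⟩` through the second derivative of `ψ`, which is symmetric. -/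
lemma form_shape_symm {ε : ℝ} {k m : ℕ} [NeZero m] {U : Set (Fin k → ℝ)} (hU : IsOpen U)
    {ψ N : (Fin k → ℝ) → (Fin m → ℝ)} (hψ : ContDiffOn ℝ (⊤ : ℕ∞) ψ U)
    (hN : ContDiffOn ℝ (⊤ : ℕ∞) N U)
    (hNtan : ∀ u ∈ U, ∀ w, form ε (N u) (fderiv ℝ ψ u w) = 0) {u : Fin k → ℝ} (hu : u ∈ U)
    (X Y : Fin k → ℝ) :
    form ε (fderiv ℝ N u X) (fderiv ℝ ψ u Y) = form ε (fderiv ℝ N u Y) (fderiv ℝ ψ u X) := by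
  have hUu := hU.mem_nhds hu
  have hψu : ContDiffAt ℝ (⊤ : ℕ∞) ψ u := hψ.contDiffAt hUu
  have hNu : HasFDerivAt N (fderiv ℝ N u) u :=
    ((hN.contDiffAt hUu).differentiableAt (by simp)).hasFDerivAt
  have htwo : (2 : WithTop ℕ∞) ≤ ((⊤ : ℕ∞) : WithTop ℕ∞) :=
    WithTop.coe_le_coe.2 (le_top : (2 : ℕ∞) ≤ ⊤)
  have h2 : HasFDerivAt (fderiv ℝ ψ) (fderiv ℝ (fderiv ℝ ψ) u) u :=
    ((hψu.fderiv_right (m := 1) (by rwa [one_add_one_eq_two])).differentiableAt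
      (by simp)).hasFDerivAt
  have key : ∀ A B : Fin k → ℝ, form ε (fderiv ℝ N u A) (fderiv ℝ ψ u B)
      + form ε (N u) (fderiv ℝ (fderiv ℝ ψ) u A B) = 0 := fun A B => by
    have h3 : HasFDerivAt (fun x => fderiv ℝ ψ x B)
        ((fderiv ℝ (fderiv ℝ ψ) u).flip B) u := by
      simpa using h2.clm_apply (hasFDerivAt_const B u)
    have := form_leibniz (ε := ε) hNu h3 (k := 0)
      (by filter_upwards [hUu] with x hx using hNtan x hx B) A
    simpa using this
  have hsymm : fderiv ℝ (fderiv ℝ ψ) u X Y = fderiv ℝ (fderiv ℝ ψ) u Y X :=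
    (hψu.isSymmSndFDerivAt (by simpa using htwo)) X Y
  have h1 := key X Y
  have h4 := key Y X
  rw [hsymm] at h1
  linarith

/-- If along a hypersurface (ψ, N) of M^n(C) a concircular field V decomposes as
V∘ψ = α·T + λ·N with λ constant, α nowhere zero and T a unit tangent field, then
every integral curve of T is a geodesic of M^n(C): γ = ψ∘c satisfies γ'' = -C·γ. -/
theorem integral_curves_of_tangential_part_are_geodesics
    (n : ℕ) (hn : 2 ≤ n) (ε R : ℝ) (hε : ε = 1 ∨ ε = -1) (hR : 0 < R)
    (U : Set (Fin (n - 1) → ℝ)) (hUo : IsOpen U) (hUc : IsPreconnected U)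
    (ψ N : (Fin (n - 1) → ℝ) → (Fin (n + 1) → ℝ))
    (hψ : ContDiffOn ℝ (⊤ : ℕ∞) ψ U) (hN : ContDiffOn ℝ (⊤ : ℕ∞) N U)
    (himm : ∀ u ∈ U, Function.Injective (fderiv ℝ ψ u))
    (hψM : ∀ u ∈ U, ψ u ∈ SpaceForm ε R n)
    (hNunit : ∀ u ∈ U, form ε (N u) (N u) = 1)
    (hNψ : ∀ u ∈ U, form ε (N u) (ψ u) = 0)
    (hNtan : ∀ u ∈ U, ∀ w : Fin (n - 1) → ℝ, form ε (N u) (fderiv ℝ ψ u w) = 0)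
    (V : (Fin (n + 1) → ℝ) → (Fin (n + 1) → ℝ)) (μ : (Fin (n + 1) → ℝ) → ℝ)
    (hV : ContDiff ℝ (⊤ : ℕ∞) V) (hμ : ContDiff ℝ (⊤ : ℕ∞) μ)
    (htanV : ∀ p ∈ SpaceForm ε R n, form ε (V p) p = 0)
    (hconc : ∀ p ∈ SpaceForm ε R n, ∀ w : Fin (n + 1) → ℝ, form ε w p = 0 →
      fderiv ℝ V p w = μ p • w - ((ε / R ^ 2) * form ε w (V p)) • p)
    (lam : ℝ) (α : (Fin (n - 1) → ℝ) → ℝ)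
    (hα : ContDiffOn ℝ (⊤ : ℕ∞) α U) (hα0 : ∀ u ∈ U, α u ≠ 0)
    (T : (Fin (n - 1) → ℝ) → (Fin (n + 1) → ℝ))
    (hTs : ContDiffOn ℝ (⊤ : ℕ∞) T U)
    (hTunit : ∀ u ∈ U, form ε (T u) (T u) = 1)
    (hTψ : ∀ u ∈ U, form ε (T u) (ψ u) = 0)
    (hTN : ∀ u ∈ U, form ε (T u) (N u) = 0)
    (hTtan : ∀ u ∈ U, T u ∈ Set.range (fderiv ℝ ψ u))
    (hdec : ∀ u ∈ U, V (ψ u) = α u • T u + lam • N u)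
    (I : Set ℝ) (hIo : IsOpen I)
    (c : ℝ → Fin (n - 1) → ℝ) (hc : ContDiffOn ℝ (⊤ : ℕ∞) c I)
    (hcU : ∀ s ∈ I, c s ∈ U)
    (hint : ∀ s ∈ I, HasDerivAt (fun t => ψ (c t)) (T (c s)) s) :
    ∀ s ∈ I, HasDerivAt (deriv (fun t => ψ (c t)))
      (-(ε / R ^ 2) • ψ (c s)) s := by
  intro s hs
  have hε0 : ε ≠ 0 := by rcases hε with h | h <;> rw [h] <;> norm_num
  have hC : ε / R ^ 2 ≠ 0 := div_ne_zero hε0 (pow_ne_zero _ hR.ne')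
  set C := ε / R ^ 2 with hCdef
  have hu := hcU s hs
  set u := c s with hudef
  have hUu := hUo.mem_nhds hu
  have dψ : HasFDerivAt ψ (fderiv ℝ ψ u) u :=
    ((hψ.contDiffAt hUu).differentiableAt (by simp)).hasFDerivAt
  have dN : HasFDerivAt N (fderiv ℝ N u) u :=
    ((hN.contDiffAt hUu).differentiableAt (by simp)).hasFDerivAt
  have dT : HasFDerivAt T (fderiv ℝ T u) u :=
    ((hTs.contDiffAt hUu).differentiableAt (by simp)).hasFDerivAt
  have dα : HasFDerivAt α (fderiv ℝ α u) u :=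
    ((hα.contDiffAt hUu).differentiableAt (by simp)).hasFDerivAt
  have dV : HasFDerivAt V (fderiv ℝ V (ψ u)) (ψ u) :=
    (hV.differentiable (by simp) (ψ u)).hasFDerivAt
  have dc : HasDerivAt c (deriv c s) s :=
    ((hc.contDiffAt (hIo.mem_nhds hs)).differentiableAt (by simp)).hasDerivAt
  set v := deriv c s with hv
  have hTv : fderiv ℝ ψ u v = T u := (dψ.comp_hasDerivAt s dc).unique (hint s hs)
  -- First-order consequences of the orthogonality relations.
  have hψψ : ∀ X, form ε (fderiv ℝ ψ u X) (ψ u) = 0 := fun X => by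
    have := form_leibniz (ε := ε) dψ dψ (k := 1 / C)
      (by filter_upwards [hUu] with x hx using (hψM x hx).1) X
    rw [form_comm (ψ u)] at this
    linarith
  have hTT : ∀ X, form ε (fderiv ℝ T u X) (T u) = 0 := fun X => by
    have := form_leibniz (ε := ε) dT dT (k := 1)
      (by filter_upwards [hUu] with x hx using hTunit x hx) X
    rw [form_comm (T u)] at this
    linarith
  have hNN : ∀ X, form ε (fderiv ℝ N u X) (N u) = 0 := fun X => by
    have := form_leibniz (ε := ε) dN dN (k := 1)
      (by filter_upwards [hUu] with x hx using hNunit x hx) X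
    rw [form_comm (N u)] at this
    linarith
  have hTNd : ∀ X, form ε (fderiv ℝ T u X) (N u) + form ε (fderiv ℝ N u X) (T u) = 0 :=
    fun X => by
      have := form_leibniz (ε := ε) dT dN (k := 0)
        (by filter_upwards [hUu] with x hx using hTN x hx) X
      rwa [form_comm (T u)] at this
  have hNψd : ∀ X, form ε (fderiv ℝ N u X) (ψ u) = 0 := fun X => by
    have := form_leibniz (ε := ε) dN dψ (k := 0)
      (by filter_upwards [hUu] with x hx using hNψ x hx) X
    rw [hNtan u hu] at this
    linarith
  -- The derivative of `V ∘ ψ = α T + λ N` in the direction `X`.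
  have hmain : ∀ X, μ (ψ u) • fderiv ℝ ψ u X
      - (C * (α u * form ε (fderiv ℝ ψ u X) (T u))) • ψ u
      = fderiv ℝ α u X • T u + α u • fderiv ℝ T u X + lam • fderiv ℝ N u X := fun X => by
    have h1 := dV.comp u dψ
    have h2 : HasFDerivAt (V ∘ ψ) _ u :=
      ((dα.smul dT).add (dN.const_smul lam)).congr_of_eventuallyEq
        (by filter_upwards [hUu] with x hx using hdec x hx)
    have h3 := congrArg (fun L : _ →L[ℝ] _ => L X) (h1.unique h2)
    have h4 := hconc (ψ u) (hψM u hu) (fderiv ℝ ψ u X) (hψψ X)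
    rw [hdec u hu, form_add_right, form_smul_right, form_smul_right,
      form_comm _ (N u), hNtan u hu, mul_zero, add_zero] at h4
    rw [← h4]
    simpa [add_comm] using h3
  have hT1 := hTunit u hu
  have hTψ0 := hTψ u hu
  have hTN0 := hTN u hu
  -- Pairing with `N` kills every term of `hmain X` except `α ⟨dT X, N⟩`.
  have hshape : ∀ X, form ε (fderiv ℝ N u X) (T u) = 0 := fun X => by
    have h2 := congrArg (fun z => form ε z (N u)) (hmain X)
    simp only [form_sub_left, form_add_left, form_smul_left, form_comm (ψ u) (N u),
      form_comm (fderiv ℝ ψ u X) (N u), hNtan u hu, hNψ u hu, hTN0, hNN] at h2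
    have h3 : α u * form ε (fderiv ℝ T u X) (N u) = 0 := by linarith
    have h4 := (mul_eq_zero.1 h3).resolve_left (hα0 u hu)
    have h5 := hTNd X
    rwa [h4, zero_add] at h5
  have hN0 : fderiv ℝ N u v = 0 := by
    refine eq_zero_of_orthogonal_frame hε0 hn (himm u hu) (p := ψ u) (ν := N u) ?_
      (hNunit u hu) (hNψ u hu) hψψ (hNtan u hu) ?_ ?_ ?_
    · rw [(hψM u hu).1]
      exact one_div_ne_zero hC
    · exact hNψd v
    · exact hNN v
    · intro X
      rw [form_shape_symm hUo hψ hN hNtan hu, hTv, hshape]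
  have hv' := hmain v
  rw [hN0, hTv, hT1, smul_zero] at hv'
  have hαv : μ (ψ u) = fderiv ℝ α u v := by
    have h1 := congrArg (fun z => form ε z (T u)) hv'
    simp only [form_sub_left, form_add_left, form_smul_left, form_zero_left, hT1, hTT,
      form_comm (ψ u) (T u), hTψ0] at h1
    linarith
  have hacc : fderiv ℝ T u v = -C • ψ u := by
    have h0 : α u • (fderiv ℝ T u v - -C • ψ u) = 0 := by
      rw [hαv] at hv'
      funext i
      have := congrFun hv' i
      simp only [Pi.sub_apply, Pi.add_apply, Pi.smul_apply, smul_eq_mul, Pi.zero_apply] at this ⊢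
      linarith
    exact sub_eq_zero.1 ((smul_eq_zero.1 h0).resolve_left (hα0 u hu))
  rw [← hacc]
  refine (dT.comp_hasDerivAt s dc).congr_of_eventuallyEq ?_
  filter_upwards [hIo.mem_nhds hs] with t ht using (hint t ht).deriv
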